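/- arXiv:0711.2468 — 2 statements merged into one kernel-verified Lean document; each statement's English description precedes it below -/
import Mathlib

section
/- Let p be an odd prime and n ≥ 2 a natural number such that p ≡ -1 (mod 2^n) but p ≢ -1 (mod 2^{n+1}). Then every Sylow 2-subgroup of the general linear group GL(2, ZMod p) is isomorphic to the quasi-dihedral (semidihedral) group of order 2^{n+2}, i.e., the group with presentation a^{2^{n+1}} = b^2 = 1, a^b = a^{2^n - 1}. -/
/-!
The field `F` with `p ^ 2` elements is a plane over `ZMod p`, so multiplications by units of `F` and
the Frobenius map `x ↦ x ^ p` are elements of `GL(2, p)`. Writing `p + 1 = 2 ^ n * m` with `m` odd,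
`2 ^ (n + 1)` divides `p ^ 2 - 1`, so the cyclic group `Fˣ` has an element `u` of order `2 ^ (n + 1)`,
and `p ≡ 2 ^ n - 1` modulo `2 ^ (n + 1)`. Hence multiplication by `u` and Frobenius satisfy the
relations of the quasi-dihedral group (`exists_semidihedral_pair`), which therefore embeds in
`GL(2, p)` (`quasiDihedral_embeds`). Since `|GL(2, p)| = p (p - 1) ^ 2 (p + 1)` has `2`-part exactly
`2 ^ (n + 2)` (`factorization_card_GL2`), the image is a Sylow `2`-subgroup, and all Sylow
`2`-subgroups are isomorphic.
-/
/-- Monoid hom from `Multiplicative (ZMod n)` sending the canonical generator to `σ`,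
given that `σ ^ n = 1`. -/
def zmodHom {M : Type*} [Monoid M] (n : ℕ) [NeZero n] (σ : M) (h : σ ^ n = 1) :
    Multiplicative (ZMod n) →* M where
  toFun c := σ ^ (Multiplicative.toAdd c).val
  map_one' := by simp
  map_mul' a b := by
    simp only [toAdd_mul]
    rw [ZMod.val_add, ← pow_eq_pow_mod _ h, pow_add]

lemma qdKey (n : ℕ) (hn : 1 ≤ n) :
    ((2 ^ n - 1 : ZMod (2 ^ (n + 1)))) ^ 2 = 1 := by
  have h0 : ((2 : ZMod (2 ^ (n + 1)))) ^ (n + 1) = 0 := by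
    have := ZMod.natCast_self (2 ^ (n + 1))
    push_cast at this
    exact this
  have hadd : n + n = (n + 1) + (n - 1) := by omega
  have h2n : (2 : ZMod (2 ^ (n + 1))) ^ n * 2 ^ n = 2 ^ (n + 1) * 2 ^ (n - 1) := by
    rw [← pow_add, ← pow_add, hadd]
  have expand : ((2 ^ n - 1 : ZMod (2 ^ (n + 1)))) ^ 2
      = 2 ^ n * 2 ^ n - 2 ^ (n + 1) + 1 := by
    rw [pow_succ]
    ring
  rw [expand, h2n, h0, zero_mul, zero_sub, neg_zero, zero_add]

/-- The additive automorphism `x ↦ (2^n - 1) * x` of `ZMod (2^(n+1))` (for `n ≥ 1`). -/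
def qdAct (n : ℕ) (hn : 1 ≤ n) : ZMod (2 ^ (n + 1)) ≃+ ZMod (2 ^ (n + 1)) where
  toFun x := (2 ^ n - 1) * x
  invFun x := (2 ^ n - 1) * x
  left_inv x := by
    show (2 ^ n - 1) * ((2 ^ n - 1) * x) = x
    rw [← mul_assoc, ← sq, qdKey n hn, one_mul]
  right_inv x := by
    show (2 ^ n - 1) * ((2 ^ n - 1) * x) = x
    rw [← mul_assoc, ← sq, qdKey n hn, one_mul]
  map_add' a b := mul_add _ a b

/-- `x ↦ (2^n - 1) * x` as an automorphism of the multiplicative cyclic group of order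
`2^(n+1)`. -/
def qdSigma (n : ℕ) (hn : 1 ≤ n) : MulAut (Multiplicative (ZMod (2 ^ (n + 1)))) :=
  AddEquiv.toMultiplicative (qdAct n hn)

lemma qdSigma_sq (n : ℕ) (hn : 1 ≤ n) : qdSigma n hn ^ 2 = 1 := by
  rw [sq]
  exact MulEquiv.ext fun x => (qdAct n hn).left_inv (Multiplicative.toAdd x)

/-- The quasi-dihedral (semidihedral) group of order `2^(n+2)`: the semidirect product
`C_{2^(n+1)} ⋊ C2` where the nontrivial element of `C2` acts by `x ↦ (2^n - 1) * x`. -/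
abbrev quasiDihedral (n : ℕ) (hn : 1 ≤ n) : Type :=
  SemidirectProduct (Multiplicative (ZMod (2 ^ (n + 1)))) (Multiplicative (ZMod 2))
    (zmodHom 2 (qdSigma n hn) (qdSigma_sq n hn))

/-- No hypothesis that `B` lies outside `⟨A⟩` is needed: for `n ≥ 2` the conjugation relation
shows that `A` and `B` do not commute. -/
theorem quasiDihedral_embeds {G : Type*} [Group G] (n : ℕ) (hn1 : 1 ≤ n) (hn : 2 ≤ n) (A B : G)
    (hA : orderOf A = 2 ^ (n + 1)) (hB : B ^ 2 = 1) (hAB : B * A * B⁻¹ = A ^ (2 ^ n - 1)) :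
    ∃ f : quasiDihedral n hn1 →* G, Function.Injective f := by
  have hA1 : A ^ 2 ^ (n + 1) = 1 := hA ▸ pow_orderOf_eq_one A
  have h4 : 4 ≤ 2 ^ n := by
    calc 4 = 2 ^ 2 := rfl
      _ ≤ 2 ^ n := Nat.pow_le_pow_right (by norm_num) hn
  have hcompat : ∀ g, (zmodHom _ A hA1).comp
      (zmodHom 2 (qdSigma n hn1) (qdSigma_sq n hn1) g).toMonoidHom
      = (MulAut.conj (zmodHom 2 B hB g)).toMonoidHom.comp (zmodHom _ A hA1) := by
    intro g
    obtain ⟨j, rfl⟩ := Multiplicative.ofAdd.surjective g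
    refine MonoidHom.ext fun x => ?_
    obtain ⟨i, rfl⟩ : ∃ i : ZMod (2 ^ (n + 1)), Multiplicative.ofAdd i = x := ⟨x.toAdd, rfl⟩
    fin_cases j
    · change A ^ (((qdSigma n hn1 ^ 0) (Multiplicative.ofAdd i)).toAdd).val
        = B ^ 0 * A ^ i.val * (B ^ 0)⁻¹
      simp
    · have key : B * A ^ i.val * B⁻¹ = A ^ ((2 ^ n - 1) * i).val := by
        rw [← conj_pow, hAB, ← pow_mul, pow_eq_pow_iff_modEq, hA,
          ← ZMod.natCast_eq_natCast_iff]
        push_cast [Nat.cast_sub (show 1 ≤ 2 ^ n by omega)]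
        simp
      change A ^ (((qdSigma n hn1 ^ 1) (Multiplicative.ofAdd i)).toAdd).val
        = B ^ 1 * A ^ i.val * (B ^ 1)⁻¹
      rw [pow_one, pow_one, key]
      rfl
  refine ⟨SemidirectProduct.lift (zmodHom _ A hA1) (zmodHom 2 B hB) hcompat, ?_⟩
  rw [injective_iff_map_eq_one]
  rintro ⟨x, y⟩ h
  obtain ⟨i, rfl⟩ : ∃ i : ZMod (2 ^ (n + 1)), Multiplicative.ofAdd i = x := ⟨x.toAdd, rfl⟩
  obtain ⟨j, rfl⟩ := Multiplicative.ofAdd.surjective y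
  replace h : A ^ i.val * B ^ j.val = 1 := h
  fin_cases j
  · replace h : A ^ i.val * B ^ 0 = 1 := h
    rw [pow_zero, mul_one] at h
    have hdvd := orderOf_dvd_of_pow_eq_one h
    rw [hA] at hdvd
    have h0 : i.val = 0 := Nat.eq_zero_of_dvd_of_lt hdvd i.val_lt
    rw [ZMod.val_eq_zero] at h0
    subst h0
    rfl
  · replace h : A ^ i.val * B ^ 1 = 1 := h
    exfalso
    -- `B` would be a power of `A`, hence commute with it, so `A ^ (2 ^ n - 2) = 1`.
    have hBA : B = (A ^ i.val)⁻¹ := by rw [pow_one] at h; exact eq_inv_of_mul_eq_one_right h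
    have hc : B * A * B⁻¹ = A := by
      rw [hBA, mul_inv_eq_iff_eq_mul]
      exact ((Commute.refl A).pow_left i.val).inv_left
    have h3 : A ^ (2 ^ n - 2) = 1 := by
      rw [hc, show 2 ^ n - 1 = (2 ^ n - 2) + 1 by omega, pow_succ] at hAB
      simpa using hAB
    have h5 := Nat.le_of_dvd (by omega) (hA ▸ orderOf_dvd_of_pow_eq_one h3)
    rw [pow_succ] at h5
    omega

theorem card_quasiDihedral (n : ℕ) (hn : 1 ≤ n) : Nat.card (quasiDihedral n hn) = 2 ^ (n + 2) := by
  rw [SemidirectProduct.card]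
  simp [pow_succ]

/-- The `2`-part of `|GL(2, p)| = p (p - 1) (p ^ 2 - 1)`: with `p + 1 = 2 ^ n * m`, `m` odd and
`n ≥ 2`, the factor `p - 1` contributes a single `2`. -/
theorem factorization_card_GL2 (p n m : ℕ) [Fact p.Prime] (hn : 2 ≤ n) (hm : Odd m)
    (hpm : p + 1 = 2 ^ n * m) :
    (Nat.card (GL (Fin 2) (ZMod p))).factorization 2 = n + 2 := by
  obtain ⟨k, rfl⟩ : ∃ k, n = k + 2 := ⟨n - 2, by omega⟩
  have hmpos := hm.pos
  have hT : 0 < 2 ^ k * m := by positivity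
  have hpT : p + 1 = 4 * (2 ^ k * m) := by rw [hpm]; ring
  set T := 2 ^ k * m with hTdef
  obtain ⟨t, ht⟩ : ∃ t, T = t + 1 := ⟨T - 1, by omega⟩
  have hp : p = 4 * t + 3 := by omega
  have hcard : Nat.card (GL (Fin 2) (ZMod p)) = 2 ^ (k + 2 + 2) * (m * (p * (2 * t + 1) ^ 2)) := by
    rw [Matrix.card_GL_field]
    simp only [Fin.prod_univ_two, ZMod.card, Fin.val_zero, Fin.val_one, pow_zero, pow_one]
    have e1 : p ^ 2 - 1 = (4 * T) * (2 * (2 * t + 1)) := by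
      rw [hp, ht]; apply Nat.sub_eq_of_eq_add; ring
    have e2 : p ^ 2 - p = p * (2 * (2 * t + 1)) := by
      rw [hp]; apply Nat.sub_eq_of_eq_add; ring
    rw [e1, e2, hTdef]; ring
  have hodd : Odd (m * (p * (2 * t + 1) ^ 2)) :=
    hm.mul (Odd.mul ⟨2 * t + 1, by omega⟩ (Odd.pow ⟨t, rfl⟩))
  rw [hcard, Nat.factorization_mul (by positivity) hodd.pos.ne', Nat.Prime.factorization_pow Nat.prime_two]
  simp [Nat.factorization_eq_zero_of_not_dvd hodd.not_two_dvd_nat]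

/-- The pair comes from the field `F` with `p ^ 2` elements, regarded as a plane over `ZMod p`: `A` is
multiplication by a unit `u` of order `2 ^ (n + 1)` and `B` is the Frobenius map, which conjugates
multiplication by `u` to multiplication by `u ^ p = u ^ (2 ^ n - 1)`. -/
theorem exists_semidihedral_pair (p n m : ℕ) [Fact p.Prime] (hn : 2 ≤ n) (hm : Odd m)
    (hpm : p + 1 = 2 ^ n * m) :
    ∃ A B : GL (Fin 2) (ZMod p), orderOf A = 2 ^ (n + 1) ∧ B ^ 2 = 1 ∧
      B * A * B⁻¹ = A ^ (2 ^ n - 1) := by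
  have hp2 : 1 < p := (Fact.out : p.Prime).one_lt
  let F := GaloisField p 2
  have hcF : Nat.card F = p ^ 2 := GaloisField.card p 2 (by norm_num)
  have : Fintype F := Fintype.ofFinite F
  have hfr : Module.finrank (ZMod p) F = 2 := GaloisField.finrank p (by norm_num)
  have hdvd : 2 ^ (n + 1) ∣ Nat.card Fˣ := by
    rw [Nat.card_units, hcF]
    have : p ^ 2 - 1 = (p + 1) * (p - 1) := by simpa using Nat.sq_sub_sq p 1
    rw [this, pow_succ]
    refine mul_dvd_mul ⟨m, hpm⟩ ?_
    have : 2 ∣ p + 1 := hpm ▸ (dvd_pow_self 2 (by omega)).mul_right m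
    omega
  obtain ⟨u, hu⟩ : ∃ u : Fˣ, orderOf u = 2 ^ (n + 1) := by
    obtain ⟨g, hg⟩ := IsCyclic.exists_ofOrder_eq_natCard (α := Fˣ)
    obtain ⟨d, hd⟩ := hdvd
    have hd0 : d ≠ 0 := by
      rintro rfl
      exact Nat.card_pos.ne' hd
    refine ⟨g ^ d, ?_⟩
    rw [orderOf_pow_of_dvd hd0 ⟨2 ^ (n + 1), by rw [hg, hd, mul_comm]⟩, hg, hd]
    exact Nat.mul_div_cancel _ (Nat.pos_of_ne_zero hd0)
  have hup : u ^ p = u ^ (2 ^ n - 1) := by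
    rw [pow_eq_pow_iff_modEq, hu]
    obtain ⟨k, rfl⟩ := hm
    have h1 : 1 ≤ 2 ^ n := Nat.one_le_two_pow
    have : p = 2 ^ n - 1 + 2 ^ (n + 1) * k := by
      have : 2 ^ n * (2 * k + 1) = 2 ^ n + 2 ^ (n + 1) * k := by ring
      omega
    rw [this]
    simp [Nat.ModEq]
  let b : Module.Basis (Fin 2) (ZMod p) F := Module.finBasisOfFinrankEq _ _ hfr
  let e : (Module.End (ZMod p) F)ˣ ≃* GL (Fin 2) (ZMod p) :=
    Units.mapEquiv (LinearMap.toMatrixAlgEquiv b).toMulEquiv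
  let A : (Module.End (ZMod p) F)ˣ := Units.map (Algebra.lmul (ZMod p) F).toMonoidHom u
  let φ : Module.End (ZMod p) F := (FiniteField.frobeniusAlgHom (ZMod p) F).toLinearMap
  have hφ : ∀ x, φ x = x ^ p := fun x => by simp [φ, FiniteField.frobeniusAlgHom_apply]
  have hF : ∀ x : F, (x ^ p) ^ p = x := fun x => by
    rw [← pow_mul, ← sq, ← hcF, Nat.card_eq_fintype_card, FiniteField.pow_card]
  have hφφ : φ * φ = 1 := by ext x; simp [hφ, hF]
  let B : (Module.End (ZMod p) F)ˣ := ⟨φ, φ, hφφ, hφφ⟩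
  have hAinj : Function.Injective (Units.map (Algebra.lmul (ZMod p) F).toMonoidHom) :=
    Units.map_injective Algebra.lmul_injective
  refine ⟨e A, e B, ?_, ?_, ?_⟩
  · rw [MulEquiv.orderOf_eq, orderOf_injective _ hAinj, hu]
  · rw [← map_pow, sq, show B * B = 1 from Units.ext hφφ, map_one]
  · rw [← map_inv, ← map_mul, ← map_mul, ← map_pow]
    congr 1
    rw [← map_pow, ← hup]
    apply Units.ext
    ext x
    change φ (u * φ x) = ((u ^ p : Fˣ) : F) * x
    rw [hφ, hφ, mul_pow, hF, Units.val_pow_eq_pow_val]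

/-- If `p` is an odd prime with `p ≡ -1 (mod 2^n)` but `p ≢ -1 (mod 2^(n+1))` (`n ≥ 2`), then
every Sylow 2-subgroup of `GL(2, ZMod p)` is isomorphic to the quasi-dihedral group of order
`2^(n+2)`. -/
theorem sylow_two_GL2_iso_quasiDihedral (p n : ℕ) (hp : p.Prime) (hodd : Odd p) (hn : 2 ≤ n)
    (h1 : (p : ℤ) ≡ -1 [ZMOD (2 ^ n : ℕ)]) (h2 : ¬ (p : ℤ) ≡ -1 [ZMOD (2 ^ (n + 1) : ℕ)])
    (P : Sylow 2 (Matrix.GeneralLinearGroup (Fin 2) (ZMod p))) :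
    Nonempty (P ≃* quasiDihedral n (le_trans one_le_two hn)) := by
  have : Fact p.Prime := ⟨hp⟩
  have hp1 : ((p + 1 : ℕ) : ℤ) = p - (-1) := by push_cast; ring
  obtain ⟨m, hpm⟩ : 2 ^ n ∣ p + 1 := by
    rw [← Int.natCast_dvd_natCast, hp1]
    exact h1.symm.dvd
  have hm : Odd m := by
    rw [← Nat.not_even_iff_odd]
    rintro hm
    obtain ⟨k, rfl⟩ := hm.two_dvd
    apply h2
    refine (Int.modEq_of_dvd ?_).symm
    rw [← hp1, Int.natCast_dvd_natCast, hpm]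
    exact ⟨k, by ring⟩
  obtain ⟨A, B, hA, hB, hAB⟩ := exists_semidihedral_pair p n m hn hm hpm
  obtain ⟨f, hf⟩ := quasiDihedral_embeds n (le_trans one_le_two hn) hn A B hA hB hAB
  have hcard : Nat.card f.range
      = 2 ^ (Nat.card (Matrix.GeneralLinearGroup (Fin 2) (ZMod p))).factorization 2 := by
    rw [factorization_card_GL2 p n m hn hm hpm, ← card_quasiDihedral n (le_trans one_le_two hn)]
    exact (Nat.card_congr (MonoidHom.ofInjective hf).toEquiv).symm
  exact ⟨(P.equiv (Sylow.ofCard f.range hcard)).trans (MonoidHom.ofInjective hf).symm⟩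
end

section
/- The automorphism group of A4 × A4, the direct product of two copies of the alternating group on 4 letters, is isomorphic to the wreath product S4 wr C2, i.e., to the semidirect product (S4 × S4) ⋊ C2 in which the nontrivial element of C2 swaps the two direct factors; in particular it has order 1152. -/
/-- The coordinate-swap automorphism of `G × G`. -/
def swapAut (G : Type*) [Group G] : MulAut (G × G) :=
  (MulEquiv.prodComm : G × G ≃* G × G)

lemma swapAut_sq (G : Type*) [Group G] : swapAut G ^ 2 = 1 := by
  rw [sq]
  exact MulEquiv.ext fun x => Prod.swap_swap x

/-- The wreath product `G wr C2`: the semidirect product `(G × G) ⋊ C2` where the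
nontrivial element of `C2` swaps the two factors. -/
abbrev wreathC2 (G : Type*) [Group G] : Type _ :=
  SemidirectProduct (G × G) (Multiplicative (ZMod 2)) (zmodHom 2 (swapAut G) (swapAut_sq G))

/-- The alternating group on four letters. -/
abbrev A4 : Type := alternatingGroup (Fin 4)

/-- The double transposition `(0 1)(2 3)`. -/
def vA4 : A4 := ⟨Equiv.swap 0 1 * Equiv.swap 2 3, Equiv.Perm.mem_alternatingGroup.mpr (by decide)⟩

/-- The 3-cycle `(0 1 2)`. -/
def cA4 : A4 := ⟨Equiv.swap 0 1 * Equiv.swap 1 2, Equiv.Perm.mem_alternatingGroup.mpr (by decide)⟩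

lemma A4_words (g : A4) :
    ∃ i j k : Fin 3, g = cA4 ^ (i : ℕ) * vA4 ^ (j : ℕ) * cA4 ^ (k : ℕ) := by
  revert g; decide +kernel

lemma exists_conj_pair (x y : A4) (hx : x ≠ 1) (hx2 : x * x = 1) (hy : y ≠ 1)
    (hy3 : y * y * y = 1) :
    ∃ σ : Equiv.Perm (Fin 4), σ * vA4 * σ⁻¹ = x ∧ σ * cA4 * σ⁻¹ = y := by
  revert x y; decide +kernel

/-- Every nontrivial normal subgroup of `A4` contains `vA4`, in explicit form. -/
lemma exists_vA4_eq (x : A4) (hx : x ≠ 1) :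
    ∃ g h : A4, (g * x * g⁻¹) * (h * x * h⁻¹)⁻¹ = vA4 := by
  revert x; decide +kernel

lemma vA4_not_central : ¬ ∀ g : A4, g * vA4 = vA4 * g := by decide +kernel

lemma conjNormal_ker (σ : Equiv.Perm (Fin 4))
    (hv : σ * vA4 * σ⁻¹ = vA4) (hc : σ * cA4 * σ⁻¹ = cA4) : σ = 1 := by
  revert σ; decide +kernel

lemma conjNormal_injective :
    Function.Injective (MulAut.conjNormal : Equiv.Perm (Fin 4) →* MulAut A4) := by
  rw [injective_iff_map_eq_one]
  intro σ h
  apply conjNormal_ker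
  · rw [← MulAut.conjNormal_apply, h]; rfl
  · rw [← MulAut.conjNormal_apply, h]; rfl

lemma conjNormal_surjective :
    Function.Surjective (MulAut.conjNormal : Equiv.Perm (Fin 4) →* MulAut A4) := by
  intro φ
  obtain ⟨σ, hv, hc⟩ := exists_conj_pair (φ vA4) (φ cA4)
    (by rw [Ne, EmbeddingLike.map_eq_one_iff]; decide)
    (by rw [← map_mul, EmbeddingLike.map_eq_one_iff]; decide)
    (by rw [Ne, EmbeddingLike.map_eq_one_iff]; decide)
    (by rw [← map_mul, ← map_mul, EmbeddingLike.map_eq_one_iff]; decide)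
  rw [← MulAut.conjNormal_apply, Subtype.coe_inj] at hv hc
  refine ⟨σ, MulEquiv.ext fun g => ?_⟩
  obtain ⟨i, j, k, rfl⟩ := A4_words g
  simp only [map_mul, map_pow, hv, hc]

/-- If `α, β : A4 → A4` have commuting images that together generate `A4` then `vA4` lies in the
image of `α` as soon as `α` is nontrivial. -/
lemma vA4_mem_range (α β : A4 →* A4) (hc : ∀ a b, α a * β b = β b * α a)
    (hs : ∀ g, ∃ a b, α a * β b = g) (hα : ∃ a, α a ≠ 1) : ∃ a, α a = vA4 := by
  -- Conjugating by `α p * β q` acts on `α a` as conjugation by `α p`: the image of `α` is normal.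
  have conj : ∀ g a, ∃ a', α a' = g * α a * g⁻¹ := by
    intro g a
    obtain ⟨p, q, rfl⟩ := hs g
    refine ⟨p * a * p⁻¹, ?_⟩
    have : α p * β q * α a * (α p * β q)⁻¹ = α p * (β q * α a) * (β q)⁻¹ * (α p)⁻¹ := by group
    rw [this, ← hc]
    simp [mul_assoc]
  obtain ⟨a, ha⟩ := hα
  obtain ⟨g, h, hgh⟩ := exists_vA4_eq (α a) ha
  obtain ⟨p, hp⟩ := conj g a
  obtain ⟨q, hq⟩ := conj h a
  exact ⟨p * q⁻¹, by rw [map_mul, map_inv, hp, hq, hgh]⟩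

lemma trivial_or_trivial (α β : A4 →* A4) (hc : ∀ a b, α a * β b = β b * α a)
    (hs : ∀ g, ∃ a b, α a * β b = g) : (∀ a, α a = 1) ∨ (∀ b, β b = 1) := by
  by_contra! h
  obtain ⟨a, ha⟩ := vA4_mem_range α β hc hs h.1
  obtain ⟨b, hb⟩ := vA4_mem_range β α (fun a b => (hc b a).symm)
    (fun g => by obtain ⟨a, b, h⟩ := hs g; exact ⟨b, a, by rw [← hc, h]⟩) h.2
  refine vA4_not_central fun g => ?_
  obtain ⟨p, q, rfl⟩ := hs g
  calc α p * β q * vA4 = α p * (β q * α a) := by rw [ha, mul_assoc]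
    _ = α p * β b * β q := by rw [← hc, ha, hb, mul_assoc]
    _ = vA4 * (α p * β q) := by rw [hc, hb, mul_assoc]

/-- A surjection `π` onto `A4`, such as a coordinate, precomposed with an automorphism of
`A4 × A4` kills one of the two factors. -/
lemma coord_trivial (φ : MulAut (A4 × A4)) (π : A4 × A4 →* A4) (hπ : Function.Surjective π) :
    (∀ a, π (φ (a, 1)) = 1) ∨ (∀ b, π (φ (1, b)) = 1) := by
  refine trivial_or_trivial
    ((π.comp φ.toMonoidHom).comp (MonoidHom.inl A4 A4))
    ((π.comp φ.toMonoidHom).comp (MonoidHom.inr A4 A4)) (fun a b => ?_) (fun g => ?_)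
  · simp [← map_mul]
  · obtain ⟨x, rfl⟩ := hπ g
    obtain ⟨⟨a, b⟩, rfl⟩ := φ.surjective x
    exact ⟨a, b, by simp [← map_mul]⟩

/-- The componentwise conjugation action of `S4 × S4` on `A4 × A4`. -/
def pairToAut : Equiv.Perm (Fin 4) × Equiv.Perm (Fin 4) →* MulAut (A4 × A4) where
  toFun p := MulEquiv.prodCongr (MulAut.conjNormal p.1) (MulAut.conjNormal p.2)
  map_one' := by simp only [Prod.fst_one, Prod.snd_one, map_one]; rfl
  map_mul' p q := by simp only [Prod.fst_mul, Prod.snd_mul, map_mul]; rfl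

lemma pairToAut_apply (p : Equiv.Perm (Fin 4) × Equiv.Perm (Fin 4)) (x : A4 × A4) :
    pairToAut p x = (MulAut.conjNormal p.1 x.1, MulAut.conjNormal p.2 x.2) := rfl

lemma swapAut_apply {G : Type*} [Group G] (x : G × G) : swapAut G x = (x.2, x.1) := rfl

lemma zmodHom_gen {M : Type*} [Monoid M] (σ : M) (h : σ ^ 2 = 1) :
    zmodHom 2 σ h (Multiplicative.ofAdd 1) = σ := pow_one σ

lemma C2_cases (c : Multiplicative (ZMod 2)) : c = 1 ∨ c = Multiplicative.ofAdd 1 := by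
  revert c; decide

/-- The natural action of `S4 wr C2` on `A4 × A4`. -/
def wreathToAut : wreathC2 (Equiv.Perm (Fin 4)) →* MulAut (A4 × A4) :=
  SemidirectProduct.lift pairToAut (zmodHom 2 (swapAut A4) (swapAut_sq A4)) (by
    intro c
    rcases C2_cases c with rfl | rfl
    · ext1 p; simp
    · rw [zmodHom_gen, zmodHom_gen]
      ext1 p
      refine MulEquiv.ext fun x => ?_
      rfl)

lemma wreathToAut_apply (w : wreathC2 (Equiv.Perm (Fin 4))) :
    wreathToAut w = pairToAut w.left * zmodHom 2 (swapAut A4) (swapAut_sq A4) w.right := rfl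

lemma wreathToAut_injective : Function.Injective wreathToAut := by
  rw [injective_iff_map_eq_one]
  rintro ⟨p, c⟩ h
  rw [wreathToAut_apply] at h
  rcases C2_cases c with rfl | rfl
  · simp only [map_one, mul_one] at h
    have h1 : p.1 = 1 := conjNormal_injective (MulEquiv.ext fun a => by
      have := congrArg Prod.fst (DFunLike.congr_fun h (a, 1))
      simpa [pairToAut_apply] using this)
    have h2 : p.2 = 1 := conjNormal_injective (MulEquiv.ext fun a => by
      have := congrArg Prod.snd (DFunLike.congr_fun h (1, a))
      simpa [pairToAut_apply] using this)
    exact SemidirectProduct.ext (Prod.ext h1 h2) rfl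
  · -- A pair of automorphisms composed with the swap moves `(v, 1)` to the second factor.
    exfalso
    have := congrArg Prod.fst (DFunLike.congr_fun h (vA4, 1))
    simp only [zmodHom_gen, MulAut.mul_apply, swapAut_apply, pairToAut_apply, map_one,
      MulAut.one_apply] at this
    exact absurd this (by decide)

/-- An automorphism preserving both factors is a pair of conjugations. -/
lemma exists_pair (φ : MulAut (A4 × A4)) (h1 : ∀ b, (φ (1, b)).1 = 1)
    (h2 : ∀ a, (φ (a, 1)).2 = 1) : ∃ p, pairToAut p = φ := by
  have inj1 : Function.Injective
      (((MonoidHom.fst A4 A4).comp φ.toMonoidHom).comp (MonoidHom.inl A4 A4)) := by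
    rw [injective_iff_map_eq_one]
    intro a ha
    have : φ (a, 1) = 1 := Prod.ext ha (h2 a)
    rw [EmbeddingLike.map_eq_one_iff] at this
    exact congrArg Prod.fst this
  have inj2 : Function.Injective
      (((MonoidHom.snd A4 A4).comp φ.toMonoidHom).comp (MonoidHom.inr A4 A4)) := by
    rw [injective_iff_map_eq_one]
    intro b hb
    have : φ (1, b) = 1 := Prod.ext (h1 b) hb
    rw [EmbeddingLike.map_eq_one_iff] at this
    exact congrArg Prod.snd this
  obtain ⟨σ, hσ⟩ := conjNormal_surjective
    (MulEquiv.ofBijective _ (Finite.injective_iff_bijective.mp inj1))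
  obtain ⟨τ, hτ⟩ := conjNormal_surjective
    (MulEquiv.ofBijective _ (Finite.injective_iff_bijective.mp inj2))
  refine ⟨(σ, τ), MulEquiv.ext fun x => ?_⟩
  obtain ⟨a, b⟩ := x
  have hab : φ (a, b) = φ (a, 1) * φ (1, b) := by rw [← map_mul]; simp
  rw [pairToAut_apply, hσ, hτ, hab]
  refine Prod.ext ?_ ?_
  · simp [h1]
  · simp [h2]

lemma wreathToAut_surjective : Function.Surjective wreathToAut := by
  intro φ
  have key : ∀ x : A4 × A4, (φ x).1 = 1 → (φ x).2 = 1 → x = 1 := fun x h h' => by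
    have : φ x = 1 := Prod.ext h h'
    rwa [EmbeddingLike.map_eq_one_iff] at this
  have hv : vA4 ≠ 1 := by decide
  rcases coord_trivial φ (MonoidHom.fst A4 A4) Prod.fst_surjective with h | h <;>
  rcases coord_trivial φ (MonoidHom.snd A4 A4) Prod.snd_surjective with h' | h'
  · exact absurd (congrArg Prod.fst (key (vA4, 1) (h _) (h' _))) hv
  · -- `φ` exchanges the factors, so `φ * swapAut` preserves them.
    obtain ⟨p, hp⟩ := exists_pair (φ * swapAut A4) h h'
    refine ⟨⟨p, Multiplicative.ofAdd 1⟩, ?_⟩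
    rw [wreathToAut_apply, zmodHom_gen, hp, mul_assoc, ← sq, swapAut_sq, mul_one]
  · obtain ⟨p, hp⟩ := exists_pair φ h h'
    refine ⟨⟨p, 1⟩, ?_⟩
    rw [wreathToAut_apply, map_one, hp, mul_one]
  · exact absurd (congrArg Prod.snd (key (1, vA4) (h _) (h' _))) hv

/-- The automorphism group of `A4 × A4` is isomorphic to the wreath product `S4 wr C2`;
in particular it has order 1152. -/
theorem aut_A4_prod_A4 :
    Nonempty (MulAut (alternatingGroup (Fin 4) × alternatingGroup (Fin 4)) ≃*
        wreathC2 (Equiv.Perm (Fin 4))) ∧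
      Nat.card (MulAut (alternatingGroup (Fin 4) × alternatingGroup (Fin 4))) = 1152 := by
  have e : wreathC2 (Equiv.Perm (Fin 4)) ≃* MulAut (A4 × A4) :=
    MulEquiv.ofBijective wreathToAut ⟨wreathToAut_injective, wreathToAut_surjective⟩
  refine ⟨⟨e.symm⟩, ?_⟩
  rw [← Nat.card_congr e.toEquiv, SemidirectProduct.card, Nat.card_prod, Nat.card_perm]
  simp [Nat.factorial]
end
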